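/- Lemma 1 (single-demand converse bound): In the coded caching setup with zero-error decoding, fix ℓ ∈ {1,…,K} and a demand vector d = (d_1,…,d_K) ∈ {1,…,N}^K, and let κ_d(ℓ) := |{d_1,…,d_ℓ}| be the number of distinct demands among the first ℓ receivers. Then log₂|𝒳_d| ≥ F·κ_d(ℓ) − ∑_{k=1}^{ℓ} I(W_{d_k}; V_1,…,V_k | W_{d_1},…,W_{d_{k−1}}), where I denotes conditional mutual information (base-2) of the indicated random variables. -/

import Mathlib

/-- Probability that the discrete random variable `X` (on finite space `Ω` with
probability mass function `p`) takes the value `x`. -/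
noncomputable def pr {Ω : Type*} [Fintype Ω] {α : Type*} [DecidableEq α]
    (p : Ω → ℝ) (X : Ω → α) (x : α) : ℝ :=
  ∑ ω ∈ Finset.univ.filter (fun ω => X ω = x), p ω

/-- Shannon entropy (base 2) of the discrete random variable `X`. -/
noncomputable def ent {Ω : Type*} [Fintype Ω] {α : Type*} [DecidableEq α]
    (p : Ω → ℝ) (X : Ω → α) : ℝ :=
  -∑ x ∈ Finset.univ.image X, pr p X x * Real.logb 2 (pr p X x)

/-- Conditional mutual information `I(X;Y|Z) = H(X,Z) + H(Y,Z) − H(X,Y,Z) − H(Z)`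
(base 2). -/
noncomputable def cmi {Ω : Type*} [Fintype Ω] {α β γ : Type*}
    [DecidableEq α] [DecidableEq β] [DecidableEq γ]
    (p : Ω → ℝ) (X : Ω → α) (Y : Ω → β) (Z : Ω → γ) : ℝ :=
  ent p (fun ω => (X ω, Z ω)) + ent p (fun ω => (Y ω, Z ω))
    - ent p (fun ω => (X ω, Y ω, Z ω)) - ent p Z

/-! Let `Zₖ` be the first `k` demanded messages, `Yₖ` the first `k` cache values and `X` the
delivery symbol. The quantity `H(Zₖ) + H(X | Yₖ, Zₖ)` equals `H(X) ≤ log₂|𝒳|` at `k = 0` and is at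
least `H(Z_ℓ)` at `k = ℓ`. Revealing the cache of the next receiver can only decrease
`H(X | Yₖ, Zₖ)`; its message `W` is then a function of `X` and `Yₖ₊₁`, so moving `W` to the side of
the known messages changes the quantity by exactly `I(W; Yₖ₊₁ | Zₖ)`. For independent uniform
messages, `H(Z_ℓ)` is `F` times the number of distinct demands. -/

open Finset Real

section Entropy

variable {Ω α β γ δ : Type*} [Fintype Ω] [DecidableEq α] [DecidableEq β] [DecidableEq γ]
  [DecidableEq δ] {p : Ω → ℝ}

theorem pr_nonneg (hp : 0 ≤ p) (X : Ω → α) (x : α) : 0 ≤ pr p X x :=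
  sum_nonneg fun ω _ ↦ hp ω

theorem le_pr_apply (hp : 0 ≤ p) (X : Ω → α) (ω : Ω) : p ω ≤ pr p X (X ω) :=
  single_le_sum (fun ω' _ ↦ hp ω') (by simp)

theorem pr_apply_pos (hp : 0 ≤ p) (X : Ω → α) {ω : Ω} (hω : 0 < p ω) : 0 < pr p X (X ω) :=
  hω.trans_le (le_pr_apply hp X ω)

theorem pr_apply_congr (p : Ω → ℝ) {X : Ω → α} {Y : Ω → β} (h : ∀ a b, X a = X b ↔ Y a = Y b)
    (ω : Ω) : pr p X (X ω) = pr p Y (Y ω) := by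
  simp only [pr, h]

theorem sum_pr_mul (p : Ω → ℝ) (X : Ω → α) (h : α → ℝ) :
    ∑ x ∈ univ.image X, pr p X x * h x = ∑ ω, p ω * h (X ω) := by
  rw [← sum_fiberwise_of_maps_to fun ω _ ↦ mem_image_of_mem X (mem_univ ω)]
  refine sum_congr rfl fun x _ ↦ ?_
  rw [pr, sum_mul]
  exact sum_congr rfl fun ω hω ↦ by rw [(mem_filter.mp hω).2]

theorem sum_pr (p : Ω → ℝ) (X : Ω → α) : ∑ x ∈ univ.image X, pr p X x = ∑ ω, p ω := by
  simpa using sum_pr_mul p X 1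

theorem sum_pr_prodMk (p : Ω → ℝ) (X : Ω → α) (Z : Ω → γ) (z : γ) :
    ∑ x ∈ univ.image X, pr p (fun ω ↦ (X ω, Z ω)) (x, z) = pr p Z z := by
  rw [pr, ← sum_fiberwise_of_maps_to fun ω _ ↦ mem_image_of_mem X (mem_univ ω)]
  simp only [pr, filter_filter, Prod.mk.injEq, and_comm]

theorem ent_eq_neg_sum (p : Ω → ℝ) (X : Ω → α) :
    ent p X = -∑ ω, p ω * logb 2 (pr p X (X ω)) := by
  rw [ent, sum_pr_mul p X fun x ↦ logb 2 (pr p X x)]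

theorem ent_congr (p : Ω → ℝ) {X : Ω → α} {Y : Ω → β} (h : ∀ a b, X a = X b ↔ Y a = Y b) :
    ent p X = ent p Y := by
  simp only [ent_eq_neg_sum, pr_apply_congr p h]

/- Jensen's inequality for the logarithm, through its tangent line at `1`. -/
theorem sum_mul_logb_nonpos {q : Ω → ℝ} (hp : 0 ≤ p) (hq : ∀ ω, 0 < p ω → 0 < q ω)
    (hpq : ∑ ω, p ω * q ω ≤ ∑ ω, p ω) : ∑ ω, p ω * logb 2 (q ω) ≤ 0 := by
  have tangent (ω : Ω) : p ω * log (q ω) ≤ p ω * q ω - p ω := by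
    rcases (hp ω).eq_or_lt' with h0 | hpos
    · simp [h0]
    · rw [← mul_sub_one]
      exact mul_le_mul_of_nonneg_left (log_le_sub_one_of_pos (hq ω hpos)) hpos.le
  have hlog : ∑ ω, p ω * log (q ω) ≤ 0 := by
    refine (sum_le_sum fun ω _ ↦ tangent ω).trans ?_
    rwa [sum_sub_distrib, sub_nonpos]
  simp only [logb, ← mul_div_assoc, ← sum_div]
  exact div_nonpos_of_nonpos_of_nonneg hlog (log_nonneg one_le_two)

theorem ent_le_logb_card [Fintype α] (hp : p ∈ stdSimplex ℝ Ω) (X : Ω → α) :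
    ent p X ≤ logb 2 (Fintype.card α) := by
  obtain ⟨hp0, hp1⟩ := hp
  have hΩ : Nonempty Ω := by
    by_contra h
    simp [not_nonempty_iff.mp h] at hp1
  have hα : (0 : ℝ) < Fintype.card α := by
    have := hΩ.map X
    exact_mod_cast Fintype.card_pos
  have gibbs : ∑ ω, p ω * logb 2 ((Fintype.card α * pr p X (X ω))⁻¹) ≤ 0 := by
    refine sum_mul_logb_nonpos hp0 (fun ω hω ↦ inv_pos.mpr (mul_pos hα (pr_apply_pos hp0 X hω))) ?_
    calc ∑ ω, p ω * (Fintype.card α * pr p X (X ω))⁻¹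
        = ∑ x ∈ univ.image X, pr p X x * (Fintype.card α * pr p X x)⁻¹ :=
          (sum_pr_mul p X fun x ↦ (Fintype.card α * pr p X x)⁻¹).symm
      _ ≤ ∑ _x ∈ univ.image X, (Fintype.card α : ℝ)⁻¹ := sum_le_sum fun x _ ↦ by
          rw [mul_inv_rev, ← mul_assoc]
          exact mul_le_of_le_one_left (by positivity) mul_inv_le_one
      _ ≤ ∑ _x : α, (Fintype.card α : ℝ)⁻¹ :=
          sum_le_sum_of_subset_of_nonneg (subset_univ _) fun _ _ _ ↦ by positivity
      _ = ∑ ω, p ω := by simp [hp1, hα.ne']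
  have expand (ω : Ω) : p ω * logb 2 ((Fintype.card α * pr p X (X ω))⁻¹) =
      -(p ω * logb 2 (pr p X (X ω))) - p ω * logb 2 (Fintype.card α) := by
    rcases (hp0 ω).eq_or_lt' with h0 | hpos
    · simp [h0]
    · rw [logb_inv, logb_mul hα.ne' (pr_apply_pos hp0 X hpos).ne']
      ring
  simp only [expand, sum_sub_distrib, sum_neg_distrib, ← sum_mul, hp1, one_mul] at gibbs
  rw [ent_eq_neg_sum]
  linarith

theorem sum_mul_pr_ratio_le (hp : 0 ≤ p) (X : Ω → α) (Y : Ω → β) (Z : Ω → γ) :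
    ∑ ω, p ω * (pr p (fun ω ↦ (X ω, Z ω)) (X ω, Z ω) * pr p (fun ω ↦ (Y ω, Z ω)) (Y ω, Z ω) /
      (pr p (fun ω ↦ (X ω, Y ω, Z ω)) (X ω, Y ω, Z ω) * pr p Z (Z ω))) ≤ ∑ ω, p ω := by
  set P := pr p fun ω ↦ (X ω, Y ω, Z ω)
  set Q := pr p fun ω ↦ (X ω, Z ω) with hQ
  set R := pr p fun ω ↦ (Y ω, Z ω) with hR
  have hnonneg (t : α × β × γ) : 0 ≤ Q (t.1, t.2.2) * R t.2 / pr p Z t.2.2 :=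
    div_nonneg (mul_nonneg (pr_nonneg hp _ _) (pr_nonneg hp _ _)) (pr_nonneg hp _ _)
  calc ∑ ω, p ω * (Q (X ω, Z ω) * R (Y ω, Z ω) / (P (X ω, Y ω, Z ω) * pr p Z (Z ω)))
      = ∑ t ∈ univ.image fun ω ↦ (X ω, Y ω, Z ω),
          P t * (Q (t.1, t.2.2) * R t.2 / (P t * pr p Z t.2.2)) :=
        (sum_pr_mul p (fun ω ↦ (X ω, Y ω, Z ω)) fun t ↦
          Q (t.1, t.2.2) * R t.2 / (P t * pr p Z t.2.2)).symm
    _ ≤ ∑ t ∈ univ.image fun ω ↦ (X ω, Y ω, Z ω), Q (t.1, t.2.2) * R t.2 / pr p Z t.2.2 :=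
        sum_le_sum fun t _ ↦ by
          rw [show P t * (Q (t.1, t.2.2) * R t.2 / (P t * pr p Z t.2.2)) =
            Q (t.1, t.2.2) * R t.2 / pr p Z t.2.2 * (P t / P t) by ring]
          exact mul_le_of_le_one_right (hnonneg t) (div_self_le_one _)
    _ ≤ ∑ t ∈ univ.image X ×ˢ univ.image Y ×ˢ univ.image Z,
          Q (t.1, t.2.2) * R t.2 / pr p Z t.2.2 := by
        refine sum_le_sum_of_subset_of_nonneg ?_ fun t _ _ ↦ hnonneg t
        simp [image_subset_iff]
    _ = ∑ z ∈ univ.image Z, pr p Z z * pr p Z z / pr p Z z := by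
        simp only [sum_product_right, ← sum_div, ← sum_mul, ← mul_sum, hQ, hR, sum_pr_prodMk]
    _ = ∑ ω, p ω := by simp only [mul_self_div_self, sum_pr]

theorem cmi_eq_neg_sum (hp : 0 ≤ p) (X : Ω → α) (Y : Ω → β) (Z : Ω → γ) :
    cmi p X Y Z = -∑ ω, p ω * logb 2
      (pr p (fun ω ↦ (X ω, Z ω)) (X ω, Z ω) * pr p (fun ω ↦ (Y ω, Z ω)) (Y ω, Z ω) /
        (pr p (fun ω ↦ (X ω, Y ω, Z ω)) (X ω, Y ω, Z ω) * pr p Z (Z ω))) := by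
  simp only [cmi, ent_eq_neg_sum, ← sum_neg_distrib, ← sum_add_distrib, ← sum_sub_distrib]
  refine sum_congr rfl fun ω _ ↦ ?_
  rcases (hp ω).eq_or_lt' with h0 | hpos
  · simp [h0]
  · have hXZ := (pr_apply_pos hp (fun ω ↦ (X ω, Z ω)) hpos).ne'
    have hYZ := (pr_apply_pos hp (fun ω ↦ (Y ω, Z ω)) hpos).ne'
    have hXYZ := (pr_apply_pos hp (fun ω ↦ (X ω, Y ω, Z ω)) hpos).ne'
    have hZ := (pr_apply_pos hp Z hpos).ne'
    rw [logb_div (mul_ne_zero hXZ hYZ) (mul_ne_zero hXYZ hZ), logb_mul hXZ hYZ, logb_mul hXYZ hZ]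
    ring

theorem cmi_nonneg (hp : 0 ≤ p) (X : Ω → α) (Y : Ω → β) (Z : Ω → γ) : 0 ≤ cmi p X Y Z := by
  rw [cmi_eq_neg_sum hp, neg_nonneg]
  exact sum_mul_logb_nonpos hp (fun ω hω ↦ div_pos
    (mul_pos (pr_apply_pos hp (fun ω ↦ (X ω, Z ω)) hω) (pr_apply_pos hp (fun ω ↦ (Y ω, Z ω)) hω))
    (mul_pos (pr_apply_pos hp (fun ω ↦ (X ω, Y ω, Z ω)) hω) (pr_apply_pos hp Z hω)))
    (sum_mul_pr_ratio_le hp X Y Z)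

/-- The conditional entropy `H(X|Z) = H(X,Z) − H(Z)` (base 2). -/
noncomputable def condEnt (p : Ω → ℝ) (X : Ω → α) (Z : Ω → γ) : ℝ :=
  ent p (fun ω ↦ (X ω, Z ω)) - ent p Z

theorem condEnt_congr_right (p : Ω → ℝ) (X : Ω → α) {Y : Ω → β} {Z : Ω → γ}
    (h : ∀ a b, Y a = Y b ↔ Z a = Z b) : condEnt p X Y = condEnt p X Z := by
  have hpair : ent p (fun ω ↦ (X ω, Y ω)) = ent p fun ω ↦ (X ω, Z ω) :=
    ent_congr p fun a b ↦ by simp only [Prod.mk.injEq, h]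
  rw [condEnt, condEnt, hpair, ent_congr p h]

theorem condEnt_nonneg (hp : 0 ≤ p) (X : Ω → α) (Z : Ω → γ) : 0 ≤ condEnt p X Z := by
  have hXX : ent p (fun ω ↦ (X ω, X ω, Z ω)) = ent p fun ω ↦ (X ω, Z ω) :=
    ent_congr p fun a b ↦ by simp
  have := cmi_nonneg hp X X Z
  rw [cmi, hXX] at this
  rw [condEnt]
  linarith

theorem condEnt_prodMk_le (hp : 0 ≤ p) (X : Ω → α) (Y : Ω → β) (Z : Ω → γ) :
    condEnt p X (fun ω ↦ (Y ω, Z ω)) ≤ condEnt p X Z := by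
  have := cmi_nonneg hp X Y Z
  rw [cmi] at this
  rw [condEnt, condEnt]
  linarith

theorem condEnt_le_of_factorsThrough (hp : 0 ≤ p) (X : Ω → α) {Y : Ω → β} {Z : Ω → γ}
    (h : Z.FactorsThrough Y) : condEnt p X Y ≤ condEnt p X Z := by
  calc condEnt p X Y = condEnt p X fun ω ↦ (Y ω, Z ω) :=
        condEnt_congr_right p X fun a b ↦ by simpa using @h a b
    _ ≤ condEnt p X Z := condEnt_prodMk_le hp X Y Z

/- By the chain rule, `H(X | Y, Z) = H(X, W | Y, Z) = H(W | Y, Z) + H(X | Y, W, Z)`. -/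
theorem ent_add_condEnt_of_factorsThrough (p : Ω → ℝ) {W : Ω → δ} {X : Ω → α} {Y : Ω → β}
    {Z : Ω → γ} (h : W.FactorsThrough fun ω ↦ (X ω, Y ω, Z ω)) :
    ent p (fun ω ↦ (W ω, Z ω)) + condEnt p X (fun ω ↦ (Y ω, W ω, Z ω)) =
      ent p Z + condEnt p X (fun ω ↦ (Y ω, Z ω)) + cmi p W Y Z := by
  have hXYZ : ent p (fun ω ↦ (X ω, Y ω, W ω, Z ω)) = ent p fun ω ↦ (X ω, Y ω, Z ω) :=
    ent_congr p fun a b ↦ by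
      have := @h a b
      simp only [Prod.mk.injEq] at this ⊢
      tauto
  have hswap : ent p (fun ω ↦ (Y ω, W ω, Z ω)) = ent p fun ω ↦ (W ω, Y ω, Z ω) :=
    ent_congr p fun a b ↦ by simp only [Prod.mk.injEq, and_left_comm]
  rw [condEnt, condEnt, cmi, hXYZ, hswap]
  ring

end Entropy

section PartialTuple

variable {Ω ι : Type*} {V : ι → Type*}

/-- The tuple of those random variables `Y i` whose index satisfies `s`, encoded as a family over
all indices that takes the value `none` off `s`. -/
def partialTuple (Y : ∀ i, Ω → V i) (s : ι → Prop) [DecidablePred s] (ω : Ω) (i : ι) :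
    Option (V i) :=
  if s i then some (Y i ω) else none

theorem partialTuple_eq_iff (Y : ∀ i, Ω → V i) (s : ι → Prop) [DecidablePred s] (a b : Ω) :
    partialTuple Y s a = partialTuple Y s b ↔ ∀ i, s i → Y i a = Y i b := by
  simp only [funext_iff, partialTuple]
  refine forall_congr' fun i ↦ ?_
  by_cases hi : s i <;> simp [hi]

end PartialTuple

section UniformMessages

theorem ent_uniform_of_card_fiber {Ω α : Type*} [Fintype Ω] [Nonempty Ω] [DecidableEq α]
    (X : Ω → α) {c : ℕ} (hc : ∀ ω, #{ω' | X ω' = X ω} = c) :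
    ent (fun _ ↦ 1 / (Fintype.card Ω : ℝ)) X = logb 2 (Fintype.card Ω / c) := by
  have hpr (ω : Ω) :
      pr (fun _ ↦ 1 / (Fintype.card Ω : ℝ)) X (X ω) = (Fintype.card Ω / c : ℝ)⁻¹ := by
    simp [pr, hc, div_eq_mul_inv]
  simp only [ent_eq_neg_sum, hpr, logb_inv]
  simp

variable {ι A : Type*} [Fintype ι] [DecidableEq ι] [Fintype A] [DecidableEq A]

theorem card_filter_restrict_eq (S : Finset ι) (w : ι → A) :
    #{w' : ι → A | S.restrict w' = S.restrict w} = Fintype.card A ^ #Sᶜ := by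
  have hbox : ({w' : ι → A | S.restrict w' = S.restrict w} : Finset (ι → A)) =
      Fintype.piFinset fun j ↦ if j ∈ Sᶜ then univ else {w j} := by
    ext w'
    simp only [mem_filter_univ, funext_iff, Subtype.forall, restrict, Fintype.mem_piFinset]
    refine forall_congr' fun j ↦ ?_
    by_cases hj : j ∈ S <;> simp [hj]
  simp only [hbox, Fintype.card_piFinset, apply_ite card, card_univ, card_singleton]
  rw [prod_ite_mem, univ_inter, prod_const]

theorem ent_uniform_restrict [Nonempty A] (S : Finset ι) :
    ent (fun _ : ι → A ↦ 1 / (Fintype.card (ι → A) : ℝ)) S.restrict =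
      logb 2 (Fintype.card A) * #S := by
  have hA : (Fintype.card A : ℝ) ≠ 0 := by exact_mod_cast Fintype.card_ne_zero
  rw [ent_uniform_of_card_fiber _ (card_filter_restrict_eq S), Fintype.card_fun,
    ← card_add_card_compl S, pow_add]
  push_cast
  rw [mul_div_cancel_right₀ _ (pow_ne_zero _ hA), logb_pow, mul_comm]

theorem ent_uniform_partialTuple [Nonempty A] {κ : Type*} [Fintype κ] (d : κ → ι)
    (s : κ → Prop) [DecidablePred s] :
    ent (fun _ : ι → A ↦ 1 / (Fintype.card (ι → A) : ℝ)) (partialTuple (fun k w ↦ w (d k)) s) =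
      logb 2 (Fintype.card A) * #(({k | s k} : Finset κ).image d) := by
  rw [← ent_uniform_restrict]
  exact ent_congr _ fun a b ↦ by rw [partialTuple_eq_iff]; simp [funext_iff]

end UniformMessages

section Converse

variable {Ω χ : Type*} [Fintype Ω] [DecidableEq χ] {p : Ω → ℝ} {K : ℕ} {A V : Fin K → Type*}
  [∀ k, DecidableEq (A k)] [∀ k, DecidableEq (V k)]

/-- The quantity `H(W_1,…,W_m) + H(X | Y_1,…,Y_m, W_1,…,W_m)`, followed in the converse from
`m = 0`, where it is `H(X)`, to `m = ℓ`, where it bounds `H(W_1,…,W_ℓ)` from above. Here `W_k` is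
the message demanded by receiver `k`, not the `k`-th message. -/
noncomputable def conversePotential (p : Ω → ℝ) (X : Ω → χ) (Y : ∀ k, Ω → V k)
    (W : ∀ k, Ω → A k) (m : ℕ) : ℝ :=
  ent p (partialTuple W fun j ↦ (j : ℕ) < m) +
    condEnt p X fun ω ↦
      (partialTuple Y (fun i ↦ (i : ℕ) < m) ω, partialTuple W (fun j ↦ (j : ℕ) < m) ω)

theorem conversePotential_zero (p : Ω → ℝ) (X : Ω → χ) (Y : ∀ k, Ω → V k) (W : ∀ k, Ω → A k) :
    conversePotential p X Y W 0 = ent p X := by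
  have hcond : condEnt p X (fun ω ↦ (partialTuple Y (fun i ↦ (i : ℕ) < 0) ω,
      partialTuple W (fun j ↦ (j : ℕ) < 0) ω)) =
      condEnt p X (partialTuple W fun j ↦ (j : ℕ) < 0) :=
    condEnt_congr_right p X fun a b ↦ by simp [partialTuple_eq_iff]
  rw [conversePotential, hcond, condEnt, add_sub_cancel]
  exact ent_congr p fun a b ↦ by simp [partialTuple_eq_iff]

theorem ent_le_conversePotential (hp : 0 ≤ p) (X : Ω → χ) (Y : ∀ k, Ω → V k)
    (W : ∀ k, Ω → A k) (m : ℕ) :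
    ent p (partialTuple W fun j ↦ (j : ℕ) < m) ≤ conversePotential p X Y W m :=
  le_add_of_nonneg_right (condEnt_nonneg hp _ _)

variable {X : Ω → χ} {Y : ∀ k, Ω → V k} {W : ∀ k, Ω → A k}

theorem conversePotential_succ_le (hp : 0 ≤ p) (k : Fin K)
    (hdec : (W k).FactorsThrough fun ω ↦ (X ω, Y k ω)) :
    conversePotential p X Y W (k + 1) ≤ conversePotential p X Y W k +
      cmi p (W k) (partialTuple Y fun i ↦ (i : ℕ) ≤ k) (partialTuple W fun j ↦ (j : ℕ) < k) := by
  set Y' := partialTuple Y fun i ↦ (i : ℕ) ≤ k with hY'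
  set Z := partialTuple W fun j ↦ (j : ℕ) < k with hZ
  have forall_lt_succ (P : Fin K → Prop) :
      (∀ i : Fin K, (i : ℕ) < k + 1 → P i) ↔ P k ∧ ∀ i : Fin K, (i : ℕ) < k → P i := by
    simp only [Order.lt_add_one_iff, le_iff_eq_or_lt, Fin.val_inj, or_imp, forall_and, forall_eq]
  have hW (a b : Ω) : partialTuple W (fun j ↦ (j : ℕ) < k + 1) a =
      partialTuple W (fun j ↦ (j : ℕ) < k + 1) b ↔ (W k a, Z a) = (W k b, Z b) := by
    simp only [Prod.mk.injEq, hZ, partialTuple_eq_iff, forall_lt_succ]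
  have hYW (a b : Ω) : (partialTuple Y (fun i ↦ (i : ℕ) < k + 1) a,
      partialTuple W (fun j ↦ (j : ℕ) < k + 1) a) =
      (partialTuple Y (fun i ↦ (i : ℕ) < k + 1) b, partialTuple W (fun j ↦ (j : ℕ) < k + 1) b) ↔
      (Y' a, W k a, Z a) = (Y' b, W k b, Z b) := by
    rw [Prod.mk.injEq, hW, Prod.mk.injEq (Y' a), hY']
    simp only [partialTuple_eq_iff, Order.lt_add_one_iff]
  have decode : (W k).FactorsThrough fun ω ↦ (X ω, Y' ω, Z ω) := fun a b h ↦ by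
    simp only [Prod.mk.injEq, hY', partialTuple_eq_iff] at h
    exact hdec (Prod.ext h.1 (h.2.1 k le_rfl))
  have reveal : condEnt p X (fun ω ↦ (Y' ω, Z ω)) ≤
      condEnt p X fun ω ↦ (partialTuple Y (fun i ↦ (i : ℕ) < k) ω, Z ω) :=
    condEnt_le_of_factorsThrough hp X fun a b h ↦ by
      simp only [Prod.mk.injEq, hY', partialTuple_eq_iff] at h ⊢
      exact ⟨fun i hi ↦ h.1 i hi.le, h.2⟩
  rw [conversePotential, conversePotential, ent_congr p hW, condEnt_congr_right p X hYW,
    ent_add_condEnt_of_factorsThrough p decode]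
  gcongr

theorem conversePotential_le_ent_add_sum_cmi (hp : 0 ≤ p) {ℓ : ℕ} (hℓ : ℓ ≤ K)
    (hdec : ∀ k : Fin ℓ, (W (k.castLE hℓ)).FactorsThrough fun ω ↦ (X ω, Y (k.castLE hℓ) ω)) :
    conversePotential p X Y W ℓ ≤ ent p X + ∑ k : Fin ℓ, cmi p (W (k.castLE hℓ))
      (partialTuple Y fun i ↦ (i : ℕ) ≤ k) (partialTuple W fun j ↦ (j : ℕ) < k) := by
  have increment (k : Fin ℓ) : conversePotential p X Y W (k + 1) - conversePotential p X Y W k ≤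
      cmi p (W (k.castLE hℓ)) (partialTuple Y fun i ↦ (i : ℕ) ≤ k)
        (partialTuple W fun j ↦ (j : ℕ) < k) :=
    sub_le_iff_le_add'.mpr (conversePotential_succ_le hp (k.castLE hℓ) (hdec k))
  calc conversePotential p X Y W ℓ
      = ent p X + ∑ k : Fin ℓ,
          (conversePotential p X Y W (k + 1) - conversePotential p X Y W k) := by
        rw [Fin.sum_univ_eq_sum_range fun k ↦
          conversePotential p X Y W (k + 1) - conversePotential p X Y W k, sum_range_sub,
          conversePotential_zero, add_sub_cancel]
    _ ≤ _ := by
        gcongr with k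
        exact increment k

end Converse

theorem single_demand_converse_general {Ω χ : Type*} [Fintype Ω] [Fintype χ] {p : Ω → ℝ}
    (hp : p ∈ stdSimplex ℝ Ω) {K : ℕ} {A V : Fin K → Type*} [∀ k, DecidableEq (A k)]
    [∀ k, DecidableEq (V k)] (X : Ω → χ) (Y : ∀ k, Ω → V k) (W : ∀ k, Ω → A k) {ℓ : ℕ}
    (hℓ : ℓ ≤ K)
    (hdec : ∀ k : Fin ℓ, (W (k.castLE hℓ)).FactorsThrough fun ω ↦ (X ω, Y (k.castLE hℓ) ω)) :
    ent p (partialTuple W fun j ↦ (j : ℕ) < ℓ) -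
        ∑ k : Fin ℓ, cmi p (W (k.castLE hℓ)) (partialTuple Y fun i ↦ (i : ℕ) ≤ k)
          (partialTuple W fun j ↦ (j : ℕ) < k) ≤
      logb 2 (Fintype.card χ) := by
  classical
  rw [sub_le_iff_le_add]
  calc ent p (partialTuple W fun j ↦ (j : ℕ) < ℓ)
      ≤ conversePotential p X Y W ℓ := ent_le_conversePotential hp.1 X Y W ℓ
    _ ≤ ent p X + _ := conversePotential_le_ent_add_sum_cmi hp.1 hℓ hdec
    _ ≤ logb 2 (Fintype.card χ) + _ := by grw [ent_le_logb_card hp X]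

/-- **Lemma 1 (single-demand converse bound).**
With messages i.i.d. uniform (i.e., the uniform distribution on
`Ω = Fin N → Fin (2^F)`), zero-error decoding for the demand vector `d` implies
`log₂|𝒳_d| ≥ F·κ_d(ℓ) − ∑_{k=1}^{ℓ} I(W_{d_k}; V_1,…,V_k | W_{d_1},…,W_{d_{k−1}})`,
where `κ_d(ℓ)` is the number of distinct demands among the first `ℓ` receivers.
(The tuple `(V_1,…,V_k)` is encoded as the function `i ↦ if i < k then some (V_i) else none`,
and similarly for `(W_{d_1},…,W_{d_{k−1}})`; the index `k` below is 0-based.) -/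
theorem single_demand_converse
    (N K F : ℕ) (hN : 0 < N) (hK : 0 < K) (hF : 0 < F)
    (V : Fin K → Type) [∀ k, Fintype (V k)] [∀ k, DecidableEq (V k)]
    (𝒳 : (Fin K → Fin N) → Type) [∀ d, Fintype (𝒳 d)]
    (g : ∀ k : Fin K, (Fin N → Fin (2 ^ F)) → V k)
    (f : ∀ d : Fin K → Fin N, (Fin N → Fin (2 ^ F)) → 𝒳 d)
    (φ : ∀ (k : Fin K) (d : Fin K → Fin N), 𝒳 d → V k → Fin (2 ^ F))
    (hdec : ∀ (w : Fin N → Fin (2 ^ F)) (k : Fin K) (d : Fin K → Fin N),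
      φ k d (f d w) (g k w) = w (d k))
    (d : Fin K → Fin N) (ℓ : ℕ) (hℓ1 : 1 ≤ ℓ) (hℓ2 : ℓ ≤ K) :
    (F : ℝ) * (((Finset.univ.filter (fun i : Fin K => (i : ℕ) < ℓ)).image d).card : ℝ)
      - ∑ k : Fin ℓ,
          cmi (fun _ : Fin N → Fin (2 ^ F) =>
                (1 : ℝ) / (Fintype.card (Fin N → Fin (2 ^ F)) : ℝ))
            (fun ω => ω (d (Fin.castLE hℓ2 k)))
            (fun ω => fun i : Fin K =>
              if (i : ℕ) ≤ (k : ℕ) then some (g i ω) else none)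
            (fun ω => fun j : Fin K =>
              if (j : ℕ) < (k : ℕ) then some (ω (d j)) else none)
      ≤ Real.logb 2 (Fintype.card (𝒳 d)) := by
  have hcard : (F : ℝ) = logb 2 (Fintype.card (Fin (2 ^ F))) := by simp [logb_pow]
  rw [hcard, ← ent_uniform_partialTuple]
  exact single_demand_converse_general (by simp [stdSimplex]) (f d) g (fun k ω ↦ ω (d k)) hℓ2
    fun k a b h ↦ by
      obtain ⟨hX, hV⟩ := Prod.mk.inj h
      change a (d _) = b (d _)
      rw [← hdec a, ← hdec b, hX, hV]
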